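/- Let n ≥ 1, let P be an n×n nonnegative row sub-stochastic matrix that is out-connected, let w ∈ ℝ^n with w ≥ 0, and let c ∈ ℝ^n. Then the network (P, w) with exogenous flow c has a unique equilibrium: there is exactly one x ∈ ℝ^n satisfying x = S_0^w(Pᵀx + c). -/

import Mathlib

open Matrix Finset Filter Topology

/-- The saturation function `S_0^w`. -/
def sat {n : ℕ} (w y : Fin n → ℝ) : Fin n → ℝ := fun i => min (max (y i) 0) (w i)

/-- `x` is an equilibrium of the network `(P, w)` with exogenous flow `c`. -/
def IsEquil {n : ℕ} (P : Matrix (Fin n) (Fin n) ℝ) (w c x : Fin n → ℝ) : Prop :=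
  x = sat w (Pᵀ.mulVec x + c)

/-- Reachability in the graph `G_P`. -/
def Reaches {n : ℕ} (P : Matrix (Fin n) (Fin n) ℝ) : Fin n → Fin n → Prop :=
  Relation.ReflTransGen (fun a b => 0 < P a b)

/-- The saturation function is monotone in its argument. -/
lemma sat_mono {n : ℕ} (w : Fin n → ℝ) : Monotone (sat w) := fun _ _ h i =>
  min_le_min_right _ (max_le_max_right _ (h i))

/-- The saturation function is nonexpansive in each coordinate. -/
lemma abs_sat_sub_sat_le {n : ℕ} (w y z : Fin n → ℝ) (i : Fin n) :
    |sat w y i - sat w z i| ≤ |y i - z i| :=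
  (abs_inf_sub_inf_le_abs _ _ _).trans (abs_sup_sub_sup_le_abs _ _ _)

/-- A nonnegative sub-invariant vector of an out-connected sub-stochastic matrix vanishes. -/
lemma eq_zero_of_le_transpose_mulVec {n : ℕ} {P : Matrix (Fin n) (Fin n) ℝ}
    (hP : ∀ i j, 0 ≤ P i j) (hsub : ∀ i, ∑ j, P i j ≤ 1)
    (hout : ∀ i, ∃ j, Reaches P i j ∧ ∑ k, P j k < 1)
    {d : Fin n → ℝ} (hd : 0 ≤ d) (hle : ∀ i, d i ≤ ∑ j, P j i * d j) : d = 0 := by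
  have hswap : ∑ i, ∑ j, P j i * d j = ∑ j, (∑ i, P j i) * d j := by
    rw [Finset.sum_comm]
    simp_rw [Finset.sum_mul]
  have hrow : ∀ j, (∑ i, P j i) * d j ≤ d j := fun j =>
    mul_le_of_le_one_left (hd j) (hsub j)
  have hsum₁ : ∑ i, d i ≤ ∑ i, ∑ j, P j i * d j := Finset.sum_le_sum fun i _ => hle i
  have hsum₂ : ∑ j, (∑ i, P j i) * d j ≤ ∑ j, d j := Finset.sum_le_sum fun j _ => hrow j
  have hfix : ∀ i, d i = ∑ j, P j i * d j := fun i =>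
    (Finset.sum_eq_sum_iff_of_le fun i _ => hle i).1
      (le_antisymm hsum₁ (hswap.trans_le hsum₂)) i (Finset.mem_univ i)
  have hloss : ∀ j, (∑ i, P j i) * d j = d j := fun j =>
    (Finset.sum_eq_sum_iff_of_le fun j _ => hrow j).1
      (le_antisymm hsum₂ (hsum₁.trans_eq hswap)) j (Finset.mem_univ j)
  funext i
  obtain ⟨j, hij, hj⟩ := hout i
  induction hij using Relation.ReflTransGen.head_induction_on with
  | refl =>
    by_contra hne
    exact hj.ne (mul_right_cancel₀ hne ((hloss j).trans (one_mul _).symm))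
  | @head a b hab _ ih =>
    have hterm : P a b * d a ≤ ∑ k, P k b * d k :=
      Finset.single_le_sum (f := fun k => P k b * d k)
        (fun k _ => mul_nonneg (hP k b) (hd k)) (Finset.mem_univ a)
    rw [← hfix b, ih] at hterm
    exact le_antisymm (nonpos_of_mul_nonpos_right hterm hab) (hd a)

/-- Every network with nonnegative weights has an equilibrium, by the Knaster–Tarski theorem. -/
lemma exists_isEquil {n : ℕ} {P : Matrix (Fin n) (Fin n) ℝ} (hP : ∀ i j, 0 ≤ P i j)
    {w : Fin n → ℝ} (hw : 0 ≤ w) (c : Fin n → ℝ) : ∃ x, IsEquil P w c x := by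
  have : Fact (0 ≤ w) := ⟨hw⟩
  let f : Set.Icc 0 w →o Set.Icc 0 w :=
    { toFun := fun x => ⟨sat w (Pᵀ.mulVec x + c),
        fun i => le_min (le_max_right _ _) (hw i), fun i => min_le_right _ _⟩
      monotone' := fun x y hxy => sat_mono w fun i => by
        have h : (Pᵀ.mulVec x) i ≤ (Pᵀ.mulVec y) i := by
          simp only [Matrix.mulVec, dotProduct, Matrix.transpose_apply]
          exact Finset.sum_le_sum fun j _ => mul_le_mul_of_nonneg_left (hxy j) (hP j i)
        exact add_le_add_left h (c i) }
  exact ⟨f.lfp, (congrArg Subtype.val f.map_lfp).symm⟩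

/-- for an out-connected nonnegative row sub-stochastic matrix `P`, `w ≥ 0`
and any exogenous flow `c`, the equilibrium is unique. -/
theorem outconnected_unique_equilibrium
    {n : ℕ} (hn : 1 ≤ n) (P : Matrix (Fin n) (Fin n) ℝ)
    (hP : ∀ i j, 0 ≤ P i j) (hsub : ∀ i, ∑ j, P i j ≤ 1)
    (hO : ∃ i, ∑ j, P i j < 1)
    (hout : ∀ i, ∃ j, Reaches P i j ∧ ∑ k, P j k < 1)
    (w : Fin n → ℝ) (hw : 0 ≤ w) (c : Fin n → ℝ) :
    ∃! x : Fin n → ℝ, IsEquil P w c x := by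
  obtain ⟨x, hx⟩ := exists_isEquil hP hw c
  refine ⟨x, hx, fun y hy => ?_⟩
  have hzero : (fun i => |y i - x i|) = 0 := by
    refine eq_zero_of_le_transpose_mulVec hP hsub hout (fun i => abs_nonneg _) fun i => ?_
    calc |y i - x i| = |sat w (Pᵀ.mulVec y + c) i - sat w (Pᵀ.mulVec x + c) i| := by
          rw [← show y = _ from hy, ← show x = _ from hx]
      _ ≤ |(Pᵀ.mulVec y + c) i - (Pᵀ.mulVec x + c) i| := abs_sat_sub_sat_le _ _ _ _
      _ = |∑ j, P j i * (y j - x j)| := by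
          simp [Matrix.mulVec, dotProduct, mul_sub, Finset.sum_sub_distrib]
      _ ≤ ∑ j, |P j i * (y j - x j)| := Finset.abs_sum_le_sum_abs _ _
      _ = ∑ j, P j i * |y j - x j| := by simp_rw [abs_mul, abs_of_nonneg (hP _ _)]
  exact funext fun i => sub_eq_zero.1 (abs_eq_zero.1 (congrFun hzero i))
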